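/- Suppose ⟨·,·⟩ is naturally reductive (⟨[X,Y]_𝔪,Z⟩ + ⟨Y,[X,Z]_𝔪⟩ = 0 for all X,Y,Z ∈ 𝔪). If n = dim 𝔪 ≥ 5, then H² = (3/8) Σ_{i,j} ⟨[Z_i,Z_j]_𝔪,[Z_i,Z_j]_𝔪⟩·1 − (9/2) Σ_{i<j<k<l} ⟨Z_i, Jac_𝔪(Z_j,Z_k,Z_l)⟩ Z_i·Z_j·Z_k·Z_l in Cl(𝔪); if n ∈ {3,4}, then H² = (3/8) Σ_{i,j} ⟨[Z_i,Z_j]_𝔪,[Z_i,Z_j]_𝔪⟩·1, i.e. the degree-four part of H² vanishes. -/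

import Mathlib

open scoped BigOperators

/-- The quadratic form `v ↦ −⟨v,v⟩` on the subspace `𝔪`, built from a bilinear form `B`
on the ambient space; the associated Clifford algebra satisfies
`v·w + w·v = −2⟨v,w⟩·1` for `v,w ∈ 𝔪`. -/
noncomputable def mQF {𝔤 : Type*} [AddCommGroup 𝔤] [Module ℝ 𝔤]
    (𝔪 : Submodule ℝ 𝔤) (B : LinearMap.BilinForm ℝ 𝔤) : QuadraticForm ℝ ↥𝔪 :=
  LinearMap.BilinMap.toQuadraticMap ((-B).compl₁₂ 𝔪.subtype 𝔪.subtype)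

/-- The cubic element `H = (1/4) Σ_{i,j,k} ⟨[Z_i,Z_j]_𝔪, Z_k⟩ Z_i·Z_j·Z_k ∈ Cl(𝔪)`. -/
noncomputable def cubicH {𝔤 : Type*} [LieRing 𝔤] [LieAlgebra ℝ 𝔤]
    (𝔪 : Submodule ℝ 𝔤) (p𝔪 : 𝔤 →ₗ[ℝ] 𝔤) (B : LinearMap.BilinForm ℝ 𝔤)
    {n : ℕ} (Z : Fin n → 𝔤) (hZ𝔪 : ∀ i, Z i ∈ 𝔪) : CliffordAlgebra (mQF 𝔪 B) :=
  (1 / 4 : ℝ) • ∑ i, ∑ j, ∑ k, B (p𝔪 ⁅Z i, Z j⁆) (Z k) •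
    (CliffordAlgebra.ι (mQF 𝔪 B) ⟨Z i, hZ𝔪 i⟩ *
      CliffordAlgebra.ι (mQF 𝔪 B) ⟨Z j, hZ𝔪 j⟩ *
      CliffordAlgebra.ι (mQF 𝔪 B) ⟨Z k, hZ𝔪 k⟩)

/-- `Jac_𝔪(X,Y,Z) = [X,[Y,Z]_𝔪]_𝔪 + [Y,[Z,X]_𝔪]_𝔪 + [Z,[X,Y]_𝔪]_𝔪`. -/
noncomputable def jacM {𝔤 : Type*} [LieRing 𝔤] [LieAlgebra ℝ 𝔤]
    (p𝔪 : 𝔤 →ₗ[ℝ] 𝔤) (x y z : 𝔤) : 𝔤 :=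
  p𝔪 ⁅x, p𝔪 ⁅y, z⁆⁆ + p𝔪 ⁅y, p𝔪 ⁅z, x⁆⁆ + p𝔪 ⁅z, p𝔪 ⁅x, y⁆⁆

/-!
Write `D_b = Σ_{j,k} c_{bjk} e_j e_k`, where `c_{ijk} = ⟨[Z_i,Z_j]_𝔪, Z_k⟩` is totally skew by
natural reductivity, so that `4H = S = Σ_b e_b D_b`. The Clifford relations give
`S e_b + e_b S = -6 D_b`; moving the left factor of `S * Σ_b e_b D_b` to the
right gives `-S²` plus commutator terms, which are multiples of `Σ_b D_b²` and of a scalar. Hence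
`S² = -9 Σ_b D_b² - 12 Σ_{i,j} R_{ijij}` with
`R_{ijkl} = Σ_a c_{aij} c_{akl} = ⟨[Z_i,Z_j]_𝔪, [Z_k,Z_l]_𝔪⟩`.
Here `Σ_b D_b² = Σ R_{ijkl} e_i e_j e_k e_l`, and averaging over the cyclic permutations of
`(j,k,l)` replaces `R_{ijkl}` by a third of its cyclic sum `⟨Z_i, Jac_𝔪(Z_j,Z_k,Z_l)⟩`, up to a
multiple of the trace `Σ R_{ijij}`. The cyclic sum is alternating in all four indices, so the sum
over all indices is `4!` times the sum over `i < j < k < l`. With at most four indices,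
every term `c_{aij} c_{akl}` with `i < j < k < l` repeats an index and vanishes.
-/

section SymmetricSums

open Equiv

variable {ι M : Type*} [AddCommMonoid M]

theorem comp_perm_eq_of_comp_adjacent_swap_eq {α β : Type*} {m : ℕ} {f : (Fin (m + 1) → α) → β}
    (hf : ∀ v (i : Fin m), f (v ∘ swap i.castSucc i.succ) = f v)
    (v : Fin (m + 1) → α) (σ : Perm (Fin (m + 1))) : f (v ∘ σ) = f v := by
  have hσ : σ ∈ Submonoid.closure (Set.range fun i : Fin m ↦ swap i.castSucc i.succ) := by
    simp only [Perm.mclosure_swap_castSucc_succ, Submonoid.mem_top]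
  induction hσ using Submonoid.closure_induction generalizing v with
  | mem _ h =>
    obtain ⟨i, rfl⟩ := h
    exact hf v i
  | one => rfl
  | mul σ τ _ _ ihσ ihτ => rw [Perm.coe_mul, ← Function.comp_assoc, ihτ, ihσ]

theorem sum_eq_factorial_nsmul_sum_strictMono [Fintype ι] [LinearOrder ι] {m : ℕ}
    (f : (Fin (m + 1) → ι) → M)
    (hswap : ∀ v (i : Fin m), f (v ∘ swap i.castSucc i.succ) = f v)
    (hrep : ∀ v (i : Fin m), v i.castSucc = v i.succ → f v = 0) :
    ∑ v, f v = (m + 1).factorial • ∑ v with StrictMono v, f v := by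
  have hperm := comp_perm_eq_of_comp_adjacent_swap_eq hswap
  have hsort {v} (hv : f v ≠ 0) : StrictMono (v ∘ Tuple.sort v) := by
    refine Fin.strictMono_iff_lt_succ.2 fun i ↦ ?_
    refine (Tuple.monotone_sort v i.castSucc_lt_succ.le).lt_of_ne fun h ↦ hv ?_
    rw [← hperm v (Tuple.sort v), hrep _ i h]
  have huniq {v} (hv : f v ≠ 0) {σ : Perm (Fin (m + 1))} (hσ : StrictMono (v ∘ σ)) :
      σ = Tuple.sort v :=
    DFunLike.coe_injective <| (hsort hv).injective.of_comp_right (Equiv.surjective _)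
      |>.comp_left <| Tuple.unique_monotone hσ.monotone (Tuple.monotone_sort v)
  calc ∑ v, f v
      = ∑ v, ∑ σ : Perm (Fin (m + 1)), if StrictMono (v ∘ σ) then f v else 0 := by
        refine Finset.sum_congr rfl fun v _ ↦ ?_
        obtain hv | hv := eq_or_ne (f v) 0
        · simp only [hv, ite_self, Finset.sum_const_zero]
        · rw [Fintype.sum_eq_single (Tuple.sort v) fun σ hσ ↦
            if_neg fun h ↦ hσ (huniq hv h), if_pos (hsort hv)]
    _ = ∑ σ : Perm (Fin (m + 1)), ∑ v, if StrictMono (v ∘ σ) then f (v ∘ σ) else 0 := by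
        simp only [hperm]
        exact Finset.sum_comm
    _ = ∑ _σ : Perm (Fin (m + 1)), ∑ v, if StrictMono v then f v else 0 :=
        Finset.sum_congr rfl fun σ _ ↦
          (σ.symm.arrowCongr (Equiv.refl ι)).sum_comp fun v ↦ if StrictMono v then f v else 0
    _ = (m + 1).factorial • ∑ v with StrictMono v, f v := by
        simp only [Finset.sum_const, Finset.card_univ, Fintype.card_perm, Fintype.card_fin,
          Finset.sum_filter]

theorem sum_vecCons [Fintype ι] {m : ℕ} (f : (Fin (m + 1) → ι) → M) :
    ∑ v, f v = ∑ i, ∑ v, f (Matrix.vecCons i v) := by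
  rw [← (Fin.consEquiv fun _ ↦ ι).sum_comp, Fintype.sum_prod_type]
  rfl

theorem sum_fin_four_arrow [Fintype ι] (f : (Fin 4 → ι) → M) :
    ∑ v, f v = ∑ i, ∑ j, ∑ k, ∑ l, f ![i, j, k, l] := by
  simp only [sum_vecCons, Fintype.sum_unique]
  rfl

theorem sum_eq_nsmul_sum_lt_lt_lt [Fintype ι] [LinearOrder ι] (f : ι → ι → ι → ι → M)
    (h₁ : ∀ i j k l, f j i k l = f i j k l) (h₂ : ∀ i j k l, f i k j l = f i j k l)
    (h₃ : ∀ i j k l, f i j l k = f i j k l) (h₀ : ∀ i k l, f i i k l = 0) :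
    ∑ i, ∑ j, ∑ k, ∑ l, f i j k l =
      24 • ∑ i, ∑ j, ∑ k, ∑ l, if i < j ∧ j < k ∧ k < l then f i j k l else 0 := by
  have h₀' i j l : f i j j l = 0 := by rw [← h₁, h₂, h₀]
  have h₀'' i j k : f i j k k = 0 := by rw [← h₂, h₃, h₀']
  have h := sum_eq_factorial_nsmul_sum_strictMono (fun v : Fin 4 → ι ↦ f (v 0) (v 1) (v 2) (v 3))
    (fun v i ↦ by
      fin_cases i
      exacts [h₁ _ _ _ _, h₂ _ _ _ _, h₃ _ _ _ _])
    (fun v i hv ↦ by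
      fin_cases i
      exacts [(congrArg (f (v 0) · (v 2) (v 3)) hv.symm).trans (h₀ _ _ _),
        (congrArg (f (v 0) (v 1) · (v 3)) hv.symm).trans (h₀' _ _ _),
        (congrArg (f (v 0) (v 1) (v 2)) hv.symm).trans (h₀'' _ _ _)])
  simpa [Finset.sum_filter, sum_fin_four_arrow, Nat.factorial] using h

end SymmetricSums

/-- A family satisfying the Clifford relations of an orthonormal basis for a negative definite form:
pairwise anticommuting square roots of `-1`. -/
structure IsCliffordFrame {ι A : Type*} [Ring A] (e : ι → A) : Prop where
  mul_self i : e i * e i = -1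
  anticomm {i j} : i ≠ j → e i * e j = -(e j * e i)

/-- A totally skew three-index tensor, such as the structure constants of a naturally reductive
space. Skewness is imposed on the two adjacent transpositions, which generate the rest; repeated
indices give zero only where `2` is invertible. -/
structure IsSkew {ι K : Type*} [Neg K] (c : ι → ι → ι → K) : Prop where
  swap_left i j k : c j i k = -c i j k
  swap_right i j k : c i k j = -c i j k

/-- A four-index tensor with the curvature-type symmetries `T_{ijlk} = -T_{ijkl}` and
`T_{klij} = T_{ijkl}`; no Bianchi identity is assumed. -/
structure IsPairSymm {ι K : Type*} [Neg K] (T : ι → ι → ι → ι → K) : Prop where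
  swap_right i j k l : T i j l k = -T i j k l
  swap_pairs i j k l : T k l i j = T i j k l

section Tensors

variable {K ι : Type*} [CommRing K]

theorem eq_zero_of_eq_neg (K : Type*) {M : Type*} [CommRing K] [Invertible (2 : K)]
    [AddCommGroup M] [Module K M] {x : M} (h : x = -x) : x = 0 := by
  rw [← (isUnit_of_invertible (2 : K)).smul_eq_zero, two_smul]
  exact eq_neg_iff_add_eq_zero.1 h

/-- The sum of a four-index tensor over the cyclic permutations of its last three indices: the
left-hand side of the first Bianchi identity, and `⟨Z_i, Jac_𝔪(Z_j,Z_k,Z_l)⟩` when `T` is the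
`pairing` of the structure constants. -/
def cyclicSum (T : ι → ι → ι → ι → K) (i j k l : ι) : K :=
  T i j k l + T i k l j + T i l j k

namespace IsSkew

variable {c : ι → ι → ι → K}

theorem rotate (hc : IsSkew c) (i j k : ι) : c k i j = c i j k := by
  rw [hc.swap_left i k j, hc.swap_right i j k, neg_neg]

variable [Invertible (2 : K)]

theorem self_left (hc : IsSkew c) (i k : ι) : c i i k = 0 :=
  eq_zero_of_eq_neg K (hc.swap_left i i k)

theorem self_outer (hc : IsSkew c) (i j : ι) : c i j i = 0 := by
  rw [← hc.rotate, hc.self_left]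

end IsSkew

/-- The contraction `Σ_a c_{aij} c_{akl}`, which for the structure constants of a naturally
reductive space is `⟨[Z_i,Z_j]_𝔪, [Z_k,Z_l]_𝔪⟩`. -/
def pairing [Fintype ι] (c : ι → ι → ι → K) (i j k l : ι) : K :=
  ∑ a, c a i j * c a k l

theorem IsSkew.isPairSymm_pairing [Fintype ι] {c : ι → ι → ι → K} (hc : IsSkew c) :
    IsPairSymm (pairing c) where
  swap_right i j k l := by
    simp only [pairing, hc.swap_right _ k l, mul_neg, Finset.sum_neg_distrib]
  swap_pairs i j k l := by simp only [pairing, mul_comm]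

theorem IsSkew.cyclicSum_pairing_eq_zero [Fintype ι] [Invertible (2 : K)]
    {c : ι → ι → ι → K} (hc : IsSkew c) {i j k l : ι}
    (h : ∀ a, a = i ∨ a = j ∨ a = k ∨ a = l) : cyclicSum (pairing c) i j k l = 0 := by
  simp only [cyclicSum, pairing, ← Finset.sum_add_distrib]
  refine Finset.sum_eq_zero fun a _ ↦ ?_
  obtain rfl | rfl | rfl | rfl := h a <;> simp [hc.self_left, hc.self_outer]

namespace IsPairSymm

variable {T : ι → ι → ι → ι → K}

theorem swap_left (hT : IsPairSymm T) (i j k l : ι) : T j i k l = -T i j k l := by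
  rw [← hT.swap_pairs, hT.swap_right, hT.swap_pairs]

theorem cyclicSum_swap_left (hT : IsPairSymm T) (i j k l : ι) :
    cyclicSum T j i k l = -cyclicSum T i j k l := by
  simp only [cyclicSum]
  linear_combination hT.swap_left i j k l + hT.swap_right j k i l - hT.swap_pairs i l j k +
    hT.swap_pairs i k j l + hT.swap_right i k l j

theorem cyclicSum_swap_middle (hT : IsPairSymm T) (i j k l : ι) :
    cyclicSum T i k j l = -cyclicSum T i j k l := by
  simp only [cyclicSum]
  rw [hT.swap_right i k l j, hT.swap_right i j k l, hT.swap_right i l j k]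
  ring

theorem cyclicSum_swap_right (hT : IsPairSymm T) (i j k l : ι) :
    cyclicSum T i j l k = -cyclicSum T i j k l := by
  simp only [cyclicSum]
  rw [hT.swap_right i j k l, hT.swap_right i l j k, hT.swap_right i k l j]
  ring

end IsPairSymm

end Tensors

section Clifford

variable {K A ι : Type*} [CommRing K] [Ring A]

namespace IsCliffordFrame

variable {e : ι → A}

theorem mul_eq_neg_swap_sub_ite [DecidableEq ι] (he : IsCliffordFrame e) (i j : ι) :
    e i * e j = -(e j * e i) - if i = j then 2 • 1 else 0 := by
  split_ifs with h
  · rw [h, he.mul_self]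
    module
  · rw [he.anticomm h, sub_zero]

theorem mul_mul_eq_add_sub_ite [DecidableEq ι] (he : IsCliffordFrame e) (i j b : ι) :
    e i * e j * e b =
      e b * (e i * e j) + (if i = b then 2 • e j else 0) - if j = b then 2 • e i else 0 := by
  rw [mul_assoc, he.mul_eq_neg_swap_sub_ite j b, mul_sub, mul_neg, ← mul_assoc,
    he.mul_eq_neg_swap_sub_ite i b]
  split_ifs <;>
    simp only [sub_mul, neg_mul, smul_mul_assoc, one_mul, mul_smul_comm, mul_one, mul_assoc,
      mul_zero, zero_mul] <;>
    module

end IsCliffordFrame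

variable [Algebra K A] [Fintype ι]

/-- The degree-two element `Σ ω_{ij} e_i e_j` of the algebra. The sum is over all pairs of indices,
so `ω` is not assumed skew and the element may have a scalar part. -/
def quadElt (ω : ι → ι → K) (e : ι → A) : A :=
  ∑ i, ∑ j, ω i j • (e i * e j)

/-- The degree-three element `Σ c_{ijk} e_i e_j e_k`, which is `4H` for the structure constants;
the sum is over all triples of indices. -/
def cubicElt (c : ι → ι → ι → K) (e : ι → A) : A :=
  ∑ i, ∑ j, ∑ k, c i j k • (e i * e j * e k)

/-- The degree-four element `Σ T_{ijkl} e_i e_j e_k e_l`, summed over all quadruples of indices, so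
in general with parts of lower degree. -/
def quarticElt (T : ι → ι → ι → ι → K) (e : ι → A) : A :=
  ∑ i, ∑ j, ∑ k, ∑ l, T i j k l • (e i * e j * e k * e l)

theorem cubicElt_eq_sum_mul_quadElt (c : ι → ι → ι → K) (e : ι → A) :
    cubicElt c e = ∑ i, e i * quadElt (c i) e := by
  simp only [cubicElt, quadElt, Finset.mul_sum, mul_smul_comm, mul_assoc]

theorem quarticElt_eq_sum_mul_cubicElt (T : ι → ι → ι → ι → K) (e : ι → A) :
    quarticElt T e = ∑ i, e i * cubicElt (T i) e := by
  simp only [quarticElt, cubicElt, Finset.mul_sum, mul_smul_comm, mul_assoc]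

theorem quadElt_mul_quadElt (ω η : ι → ι → K) (e : ι → A) :
    quadElt ω e * quadElt η e = quarticElt (fun i j k l ↦ ω i j * η k l) e := by
  simp only [quadElt, quarticElt, Finset.sum_mul]
  simp only [Finset.mul_sum, smul_mul_smul_comm, mul_assoc]

theorem sum_quadElt_mul_self (c : ι → ι → ι → K) (e : ι → A) :
    ∑ a, quadElt (c a) e * quadElt (c a) e = quarticElt (pairing c) e := by
  simp only [quadElt_mul_quadElt, quarticElt, pairing, Finset.sum_smul]
  exact Finset.sum_comm.trans <| Finset.sum_congr rfl fun i _ ↦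
    Finset.sum_comm.trans <| Finset.sum_congr rfl fun j _ ↦
    Finset.sum_comm.trans <| Finset.sum_congr rfl fun k _ ↦ Finset.sum_comm

theorem IsSkew.sum_mul_sum_smul_mul_quadElt {c : ι → ι → ι → K} (hc : IsSkew c) (e : ι → A) :
    ∑ b, e b * ∑ j, ∑ k, c b j k • (e j * quadElt (c k) e) = quarticElt (pairing c) e := by
  have hexpand k : quadElt (c k) e * quadElt (c k) e =
      ∑ b, ∑ j, c b j k • (e b * (e j * quadElt (c k) e)) := by
    nth_rewrite 1 [quadElt]
    simp only [Finset.sum_mul, smul_mul_assoc, mul_assoc, ← hc.rotate _ _ k]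
  simp only [← sum_quadElt_mul_self, hexpand, Finset.mul_sum, mul_smul_comm]
  exact Finset.sum_comm_cycle

namespace IsCliffordFrame

variable {e : ι → A}

theorem quadElt_mul_apply (he : IsCliffordFrame e) {ω : ι → ι → K} (hω : ∀ i j, ω j i = -ω i j)
    (b : ι) : quadElt ω e * e b = e b * quadElt ω e + (4 : K) • ∑ k, ω b k • e k := by
  classical
  have hterm i j : ω i j • (e i * e j * e b) = ω i j • (e b * (e i * e j)) +
      ((if i = b then (2 * ω i j) • e j else 0) - if j = b then (2 * ω i j) • e i else 0) := by
    rw [he.mul_mul_eq_add_sub_ite]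
    split_ifs <;> module
  have hleft : ∑ i, ∑ j, (if i = b then (2 * ω i j) • e j else 0) =
      (2 : K) • ∑ k, ω b k • e k := by
    rw [Finset.sum_comm]
    simp only [Finset.sum_ite_eq', Finset.mem_univ, if_true, mul_smul, Finset.smul_sum]
  have hright : ∑ i, ∑ j, (if j = b then (2 * ω i j) • e i else 0) =
      -(2 : K) • ∑ k, ω b k • e k := by
    simp only [Finset.sum_ite_eq', Finset.mem_univ, if_true, mul_smul, Finset.smul_sum, hω b,
      neg_smul, smul_neg]
  simp only [quadElt, Finset.sum_mul, Finset.mul_sum, smul_mul_assoc, mul_smul_comm, hterm,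
    Finset.sum_add_distrib, Finset.sum_sub_distrib, hleft, hright]
  module

theorem quadElt_eq_neg_trace_smul_one [Invertible (2 : K)] (he : IsCliffordFrame e) {ω : ι → ι → K}
    (hω : ∀ i j, ω j i = ω i j) : quadElt ω e = -(∑ i, ω i i) • (1 : A) := by
  classical
  have hterm i j : ω i j • (e i * e j) =
      -(ω j i • (e j * e i)) - if i = j then (2 * ω i j) • (1 : A) else 0 := by
    rw [he.mul_eq_neg_swap_sub_ite, hω]
    split_ifs <;> module
  have hflip : quadElt ω e = -quadElt ω e - (2 * ∑ i, ω i i) • (1 : A) := by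
    rw [quadElt]
    conv_lhs => enter [2, i, 2, j]; rw [hterm]
    simp only [Finset.sum_sub_distrib, Finset.sum_neg_distrib, Finset.sum_ite_eq,
      Finset.mem_univ, if_true, Finset.mul_sum, Finset.sum_smul]
    rw [Finset.sum_comm]
  refine sub_eq_zero.1 (eq_zero_of_eq_neg K ?_)
  nth_rewrite 1 [hflip]
  module

theorem cubicElt_mul_apply (he : IsCliffordFrame e) {c : ι → ι → ι → K} (hc : IsSkew c) (b : ι) :
    cubicElt c e * e b = -(e b * cubicElt c e) - (6 : K) • quadElt (c b) e := by
  classical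
  have hterm a : e a * quadElt (c a) e * e b = -(e b * (e a * quadElt (c a) e)) -
      (if a = b then (2 : K) • quadElt (c a) e else 0) +
        (4 : K) • ∑ k, c a b k • (e a * e k) := by
    rw [mul_assoc, he.quadElt_mul_apply (hc.swap_right a), mul_add, ← mul_assoc,
      he.mul_eq_neg_swap_sub_ite a b]
    simp only [sub_mul, neg_mul, ite_mul, smul_mul_assoc, one_mul, zero_mul, mul_smul_comm,
      mul_assoc, Finset.mul_sum]
    split_ifs <;> module
  have hquad : ∑ a, ∑ k, c a b k • (e a * e k) = -quadElt (c b) e := by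
    simp only [quadElt, hc.swap_left b, neg_smul, Finset.sum_neg_distrib]
  rw [cubicElt_eq_sum_mul_quadElt, Finset.sum_mul, Finset.mul_sum]
  simp only [hterm, Finset.sum_add_distrib, Finset.sum_sub_distrib, Finset.sum_neg_distrib,
    Finset.sum_ite_eq', Finset.mem_univ, if_true, ← Finset.smul_sum, hquad]
  module

theorem cubicElt_mul_quadElt (he : IsCliffordFrame e) {c : ι → ι → ι → K} (hc : IsSkew c)
    {ω : ι → ι → K} (hω : ∀ i j, ω j i = -ω i j) :
    cubicElt c e * quadElt ω e = quadElt ω e * cubicElt c e +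
      (12 : K) • ∑ j, ∑ k, ω j k • (e j * quadElt (c k) e) +
        (24 : K) • ∑ l, (∑ j, ∑ k, ω j k * c k j l) • e l := by
  have hterm j k : cubicElt c e * (e j * e k) = e j * e k * cubicElt c e +
      (6 : K) • (e j * quadElt (c k) e - quadElt (c j) e * e k) := by
    rw [← mul_assoc, he.cubicElt_mul_apply hc j, sub_mul, neg_mul, mul_assoc,
      he.cubicElt_mul_apply hc k]
    simp only [mul_sub, mul_neg, mul_smul_comm, smul_mul_assoc, mul_assoc]
    module
  have hflip : ∑ j, ∑ k, ω j k • (quadElt (c j) e * e k) =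
      -∑ j, ∑ k, ω j k • (e j * quadElt (c k) e) -
        (4 : K) • ∑ l, (∑ j, ∑ k, ω j k * c k j l) • e l := by
    have hscalar : ∑ l, (∑ j, ∑ k, ω j k * c k j l) • e l =
        ∑ j, ∑ k, ω j k • ∑ l, c k j l • e l := by
      simp only [Finset.sum_smul, Finset.smul_sum, mul_smul]
      exact Finset.sum_comm.trans <| Finset.sum_congr rfl fun j _ ↦ Finset.sum_comm
    have hterm j k : ω j k • (quadElt (c j) e * e k) = -(ω k j • (e k * quadElt (c j) e)) -
        (4 : K) • ω k j • ∑ l, c j k l • e l := by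
      rw [he.quadElt_mul_apply (hc.swap_right j), hω k j]
      module
    rw [hscalar, Finset.sum_comm]
    simp only [hterm, Finset.sum_sub_distrib, Finset.sum_neg_distrib, ← Finset.smul_sum]
  rw [quadElt]
  simp only [Finset.mul_sum, Finset.sum_mul, mul_smul_comm, smul_mul_assoc,
    hterm, smul_add, smul_sub, smul_comm _ (6 : K), Finset.sum_add_distrib, Finset.sum_sub_distrib,
    ← Finset.smul_sum, hflip]
  module

theorem sum_mul_sum_contraction_eq_trace [Invertible (2 : K)] (he : IsCliffordFrame e)
    {c : ι → ι → ι → K} (hc : IsSkew c) :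
    ∑ b, e b * ∑ l, (∑ j, ∑ k, c b j k * c k j l) • e l =
      (∑ i, ∑ j, pairing c i j i j) • (1 : A) := by
  have hskew j k l : c k j l = -c l j k := by rw [← hc.rotate k j l, hc.swap_right l j k]
  have hcontr b l : ∑ j, ∑ k, c b j k * c k j l = -∑ j, ∑ k, c b j k * c l j k := by
    simp only [hskew _ _ l, mul_neg, Finset.sum_neg_distrib]
  calc ∑ b, e b * ∑ l, (∑ j, ∑ k, c b j k * c k j l) • e l
      = quadElt (fun b l ↦ ∑ j, ∑ k, c b j k * c k j l) e := by
        simp only [quadElt, Finset.mul_sum, mul_smul_comm]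
    _ = -(∑ b, ∑ j, ∑ k, c b j k * c k j b) • (1 : A) :=
        he.quadElt_eq_neg_trace_smul_one fun b l ↦ by simp only [hcontr, mul_comm]
    _ = (∑ i, ∑ j, pairing c i j i j) • (1 : A) := by
        simp only [hcontr, pairing, Finset.sum_neg_distrib, neg_neg]
        rw [← Finset.sum_comm_cycle]

theorem cubicElt_mul_self [Invertible (2 : K)] (he : IsCliffordFrame e) {c : ι → ι → ι → K}
    (hc : IsSkew c) :
    cubicElt c e * cubicElt c e =
      (-9 : K) • quarticElt (pairing c) e - (12 * ∑ i, ∑ j, pairing c i j i j) • (1 : A) := by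
  set S := cubicElt c e with hS
  have hterm b : S * (e b * quadElt (c b) e) = -(e b * quadElt (c b) e * S) -
      (12 : K) • (e b * ∑ j, ∑ k, c b j k • (e j * quadElt (c k) e)) -
      (24 : K) • (e b * ∑ l, (∑ j, ∑ k, c b j k * c k j l) • e l) -
      (6 : K) • (quadElt (c b) e * quadElt (c b) e) := by
    rw [← mul_assoc, he.cubicElt_mul_apply hc, sub_mul, neg_mul, mul_assoc,
      he.cubicElt_mul_quadElt hc (hc.swap_right b)]
    simp only [mul_add, mul_smul_comm, smul_mul_assoc, ← mul_assoc]
    module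
  have hflip : S * S = -(S * S) - (18 : K) • quarticElt (pairing c) e -
      (24 * ∑ i, ∑ j, pairing c i j i j) • (1 : A) := by
    nth_rewrite 2 [hS]
    rw [cubicElt_eq_sum_mul_quadElt, Finset.mul_sum]
    simp only [hterm, Finset.sum_sub_distrib, Finset.sum_neg_distrib, ← Finset.smul_sum,
      ← Finset.sum_mul, hc.sum_mul_sum_smul_mul_quadElt, he.sum_mul_sum_contraction_eq_trace hc,
      sum_quadElt_mul_self, ← cubicElt_eq_sum_mul_quadElt]
    module
  refine sub_eq_zero.1 (eq_zero_of_eq_neg K ?_)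
  nth_rewrite 1 [hflip]
  module

theorem cubicElt_rotate_right (he : IsCliffordFrame e) {t : ι → ι → ι → K}
    (ht : ∀ i j k, t i k j = -t i j k) :
    cubicElt (fun i j k ↦ t k i j) e =
      cubicElt t e - (4 : K) • ∑ j, (∑ i, t i j i) • e j := by
  calc cubicElt (fun i j k ↦ t k i j) e = ∑ k, quadElt (t k) e * e k := by
        simp only [cubicElt, quadElt, Finset.sum_mul, smul_mul_assoc]
        exact Finset.sum_comm_cycle
    _ = cubicElt t e + (4 : K) • ∑ k, ∑ j, t k k j • e j := by
        simp only [he.quadElt_mul_apply (ht _), Finset.sum_add_distrib, cubicElt_eq_sum_mul_quadElt,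
          Finset.smul_sum]
    _ = cubicElt t e - (4 : K) • ∑ j, (∑ i, t i j i) • e j := by
        rw [Finset.sum_comm]
        simp only [fun i j ↦ ht i j i, Finset.sum_smul, neg_smul, Finset.sum_neg_distrib, smul_neg,
          sub_eq_add_neg]

theorem cubicElt_rotate_left (he : IsCliffordFrame e) {t : ι → ι → ι → K}
    (ht : ∀ i j k, t i k j = -t i j k) :
    cubicElt (fun i j k ↦ t j k i) e =
      cubicElt t e - (2 : K) • ∑ j, (∑ i, t i j i) • e j := by
  classical
  have hterm i j k : t j k i • (e i * e j * e k) =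
      t j i k • (e j * e i * e k) - if i = j then (2 : K) • t j k i • e k else 0 := by
    rw [he.mul_eq_neg_swap_sub_ite, ht j i k]
    split_ifs <;> simp only [sub_mul, neg_mul, smul_mul_assoc, one_mul, zero_mul] <;> module
  simp only [cubicElt, hterm, Finset.sum_sub_distrib]
  congr 1
  · exact Finset.sum_comm
  · rw [← Finset.sum_comm_cycle]
    simp only [Finset.sum_ite_eq', Finset.mem_univ, if_true, Finset.smul_sum, Finset.sum_smul]
    exact Finset.sum_comm

theorem quarticElt_cyclicSum [Invertible (2 : K)] (he : IsCliffordFrame e)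
    {T : ι → ι → ι → ι → K} (hT : IsPairSymm T) :
    quarticElt (cyclicSum T) e =
      (3 : K) • quarticElt T e + (6 * ∑ i, ∑ j, T i j i j) • (1 : A) := by
  have hcubic i : cubicElt (cyclicSum T i) e =
      (3 : K) • cubicElt (T i) e - (6 : K) • ∑ k, (∑ j, T i j k j) • e k := by
    have hsplit : cubicElt (cyclicSum T i) e = cubicElt (T i) e +
        cubicElt (fun j k l ↦ T i k l j) e + cubicElt (fun j k l ↦ T i l j k) e := by
      simp only [cubicElt, cyclicSum, add_smul, Finset.sum_add_distrib]
    rw [hsplit, he.cubicElt_rotate_left (hT.swap_right i),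
      he.cubicElt_rotate_right (hT.swap_right i)]
    module
  have htrace : ∑ i, e i * ∑ k, (∑ j, T i j k j) • e k = -(∑ i, ∑ j, T i j i j) • (1 : A) := by
    rw [← he.quadElt_eq_neg_trace_smul_one fun i k ↦
      Finset.sum_congr rfl fun j _ ↦ hT.swap_pairs i j k j]
    simp only [quadElt, Finset.mul_sum, mul_smul_comm]
  simp only [quarticElt_eq_sum_mul_cubicElt, hcubic, mul_sub, mul_smul_comm,
    Finset.sum_sub_distrib, ← Finset.smul_sum, htrace]
  module

end IsCliffordFrame

end Clifford

section Ordered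

variable {K A ι : Type*} [CommRing K] [Invertible (2 : K)] [Ring A] [Algebra K A] [Fintype ι]
  [LinearOrder ι] {e : ι → A}

namespace IsCliffordFrame

theorem quarticElt_cyclicSum_eq_sum_lt (he : IsCliffordFrame e) {T : ι → ι → ι → ι → K}
    (hT : IsPairSymm T) :
    quarticElt (cyclicSum T) e = 24 • ∑ i, ∑ j, ∑ k, ∑ l,
      if i < j ∧ j < k ∧ k < l then cyclicSum T i j k l • (e i * e j * e k * e l) else 0 := by
  refine sum_eq_nsmul_sum_lt_lt_lt _ (fun i j k l ↦ ?_) (fun i j k l ↦ ?_) (fun i j k l ↦ ?_)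
    fun i k l ↦ ?_
  · obtain rfl | h := eq_or_ne i j
    · rfl
    · rw [hT.cyclicSum_swap_left, he.anticomm h.symm]
      simp only [neg_mul, smul_neg, neg_smul, neg_neg]
  · obtain rfl | h := eq_or_ne j k
    · rfl
    · rw [hT.cyclicSum_swap_middle, mul_assoc (e i), he.anticomm h.symm]
      simp only [neg_mul, mul_neg, smul_neg, neg_smul, neg_neg, mul_assoc]
  · obtain rfl | h := eq_or_ne k l
    · rfl
    · rw [hT.cyclicSum_swap_right, mul_assoc (e i * e j), he.anticomm h.symm]
      simp only [mul_neg, smul_neg, neg_smul, neg_neg, mul_assoc]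
  · rw [eq_zero_of_eq_neg K (hT.cyclicSum_swap_left i i k l), zero_smul]

theorem cubicElt_mul_self_eq_sum_lt (he : IsCliffordFrame e) {c : ι → ι → ι → K}
    (hc : IsSkew c) :
    cubicElt c e * cubicElt c e = (6 * ∑ i, ∑ j, pairing c i j i j) • (1 : A) -
      (72 : K) • ∑ i, ∑ j, ∑ k, ∑ l, if i < j ∧ j < k ∧ k < l then
        cyclicSum (pairing c) i j k l • (e i * e j * e k * e l) else 0 := by
  have hquartic := he.quarticElt_cyclicSum hc.isPairSymm_pairing
  rw [he.quarticElt_cyclicSum_eq_sum_lt hc.isPairSymm_pairing] at hquartic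
  rw [he.cubicElt_mul_self hc]
  linear_combination (norm := module) (3 : K) • hquartic

theorem cubicElt_mul_self_of_card_le_four (he : IsCliffordFrame e) {c : ι → ι → ι → K}
    (hc : IsSkew c) (hι : Fintype.card ι ≤ 4) :
    cubicElt c e * cubicElt c e = (6 * ∑ i, ∑ j, pairing c i j i j) • (1 : A) := by
  rw [he.cubicElt_mul_self_eq_sum_lt hc, sub_eq_self]
  refine smul_eq_zero_of_right _ <| Finset.sum_eq_zero fun i _ ↦ Finset.sum_eq_zero fun j _ ↦
    Finset.sum_eq_zero fun k _ ↦ Finset.sum_eq_zero fun l _ ↦ ite_eq_right_iff.2 fun h ↦ ?_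
  have hinj : Function.Injective ![i, j, k, l] := StrictMono.injective (by simp [h])
  have hsurj : Function.Surjective ![i, j, k, l] :=
    ((Fintype.bijective_iff_injective_and_card _).2
      ⟨hinj, (Fintype.card_le_of_injective _ hinj).antisymm (by simpa using hι)⟩).surjective
  rw [hc.cyclicSum_pairing_eq_zero fun a ↦ ?_, zero_smul]
  obtain ⟨x, rfl⟩ := hsurj a
  fin_cases x <;> simp

end IsCliffordFrame

end Ordered


section StructureConstants

variable {K V ι : Type*} [CommRing K]

theorem isCliffordFrame_ι [AddCommGroup V] [Module K V] {Q : QuadraticForm K V} {v : ι → V}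
    (hunit : ∀ i, Q (v i) = -1) (hortho : Pairwise fun i j ↦ Q.IsOrtho (v i) (v j)) :
    IsCliffordFrame fun i ↦ CliffordAlgebra.ι Q (v i) where
  mul_self i := by rw [CliffordAlgebra.ι_sq_scalar, hunit, map_neg, map_one]
  anticomm h := CliffordAlgebra.ι_mul_ι_comm_of_isOrtho (hortho h)

theorem isCliffordFrame_ι_mQF [DecidableEq ι] [AddCommGroup V] [Module ℝ V] {𝔪 : Submodule ℝ V}
    {B : LinearMap.BilinForm ℝ V} {Z : ι → V} (hZ : ∀ i, Z i ∈ 𝔪)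
    (hon : ∀ i j, B (Z i) (Z j) = if i = j then 1 else 0) :
    IsCliffordFrame fun i ↦ CliffordAlgebra.ι (mQF 𝔪 B) ⟨Z i, hZ i⟩ := by
  have hmQF (v : 𝔪) : mQF 𝔪 B v = -B v v := rfl
  refine isCliffordFrame_ι (fun i ↦ ?_) fun i j hij ↦ QuadraticMap.isOrtho_def.2 ?_
  · simp only [hmQF, hon, if_true]
  · simp only [hmQF, Submodule.coe_add, map_add, LinearMap.add_apply, hon, if_true, if_neg hij,
      if_neg hij.symm, add_zero, zero_add, neg_add]

theorem bilinForm_apply_eq_sum_of_mem_span [Fintype ι] [DecidableEq ι] [AddCommGroup V]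
    [Module K V] {B : LinearMap.BilinForm K V} {Z : ι → V}
    (hon : ∀ i j, B (Z i) (Z j) = if i = j then 1 else 0) (x : V) {y : V}
    (hy : y ∈ Submodule.span K (Set.range Z)) : B x y = ∑ a, B x (Z a) * B y (Z a) := by
  obtain ⟨w, rfl⟩ := (Submodule.mem_span_range_iff_exists_fun K).1 hy
  simp [LinearMap.sum_apply, hon, mul_comm]

/-- The structure constants `⟨[Z_i,Z_j]_𝔪, Z_k⟩` of the bracket on `𝔪` in the frame `Z`, where `p`
is the projection to `𝔪`. -/
def structConst [LieRing V] [LieAlgebra K V] (p : V →ₗ[K] V) (B : LinearMap.BilinForm K V)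
    (Z : ι → V) (i j k : ι) : K :=
  B (p ⁅Z i, Z j⁆) (Z k)

section NaturallyReductive

variable [LieRing V] [LieAlgebra K V] {𝔪 : Submodule K V} {p : V →ₗ[K] V}
  {B : LinearMap.BilinForm K V} {Z : ι → V}

theorem bilinForm_proj_lie_left
    (hnat : ∀ x ∈ 𝔪, ∀ y ∈ 𝔪, ∀ z ∈ 𝔪, B (p ⁅x, y⁆) z + B y (p ⁅x, z⁆) = 0)
    {x y z : V} (hx : x ∈ 𝔪) (hy : y ∈ 𝔪) (hz : z ∈ 𝔪) : B (p ⁅x, y⁆) z = B x (p ⁅y, z⁆) := by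
  rw [← lie_skew, map_neg, map_neg, LinearMap.neg_apply]
  exact neg_eq_of_add_eq_zero_right (hnat y hy x hx z hz)

theorem isSkew_structConst (hmem : ∀ x, p x ∈ 𝔪) (hsymm : ∀ x ∈ 𝔪, ∀ y ∈ 𝔪, B x y = B y x)
    (hnat : ∀ x ∈ 𝔪, ∀ y ∈ 𝔪, ∀ z ∈ 𝔪, B (p ⁅x, y⁆) z + B y (p ⁅x, z⁆) = 0)
    (hZ : ∀ i, Z i ∈ 𝔪) : IsSkew (structConst p B Z) where
  swap_left i j k := by
    simp only [structConst]
    rw [← lie_skew, map_neg, map_neg, LinearMap.neg_apply]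
  swap_right i j k := by
    simp only [structConst]
    rw [hsymm _ (hmem _) _ (hZ j)]
    exact eq_neg_of_add_eq_zero_right (hnat _ (hZ i) _ (hZ j) _ (hZ k))

theorem pairing_structConst [Fintype ι] [DecidableEq ι]
    (hon : ∀ i j, B (Z i) (Z j) = if i = j then 1 else 0)
    (hspan : ∀ x, p x ∈ Submodule.span K (Set.range Z)) (hc : IsSkew (structConst p B Z))
    (i j k l : ι) : pairing (structConst p B Z) i j k l = B (p ⁅Z i, Z j⁆) (p ⁅Z k, Z l⁆) := by
  simp only [bilinForm_apply_eq_sum_of_mem_span hon _ (hspan _), pairing, hc.rotate]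
  rfl

end NaturallyReductive

end StructureConstants

theorem stmt9_general {𝔤 : Type*} [LieRing 𝔤] [LieAlgebra ℝ 𝔤] {𝔪 : Submodule ℝ 𝔤}
    {p𝔪 : 𝔤 →ₗ[ℝ] 𝔤} (hmem𝔪 : ∀ x, p𝔪 x ∈ 𝔪) {B : LinearMap.BilinForm ℝ 𝔤}
    (hBsymm : ∀ x ∈ 𝔪, ∀ y ∈ 𝔪, B x y = B y x)
    (hnat : ∀ x ∈ 𝔪, ∀ y ∈ 𝔪, ∀ z ∈ 𝔪, B (p𝔪 ⁅x, y⁆) z + B y (p𝔪 ⁅x, z⁆) = 0)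
    {n : ℕ} {Z : Fin n → 𝔤} (hZ𝔪 : ∀ i, Z i ∈ 𝔪)
    (hZon : ∀ i j, B (Z i) (Z j) = if i = j then 1 else 0)
    (hZspan : Submodule.span ℝ (Set.range Z) = 𝔪) :
    let ι := CliffordAlgebra.ι (mQF 𝔪 B)
    let H := cubicH 𝔪 p𝔪 B Z hZ𝔪
    (H * H =
      ((3 / 8 : ℝ) * ∑ i, ∑ j, B (p𝔪 ⁅Z i, Z j⁆) (p𝔪 ⁅Z i, Z j⁆)) •
          (1 : CliffordAlgebra (mQF 𝔪 B))
        - (9 / 2 : ℝ) • ∑ i, ∑ j, ∑ k, ∑ l,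
            (if i < j ∧ j < k ∧ k < l then
              B (Z i) (jacM p𝔪 (Z j) (Z k) (Z l)) •
                (ι ⟨Z i, hZ𝔪 i⟩ * ι ⟨Z j, hZ𝔪 j⟩ * ι ⟨Z k, hZ𝔪 k⟩ * ι ⟨Z l, hZ𝔪 l⟩)
             else 0)) ∧
    (n ≤ 4 →
      H * H =
        ((3 / 8 : ℝ) * ∑ i, ∑ j, B (p𝔪 ⁅Z i, Z j⁆) (p𝔪 ⁅Z i, Z j⁆)) •
          (1 : CliffordAlgebra (mQF 𝔪 B))) := by
  intro ι H
  have he := isCliffordFrame_ι_mQF hZ𝔪 hZon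
  have hc := isSkew_structConst hmem𝔪 hBsymm hnat hZ𝔪
  have hpair := pairing_structConst hZon (fun x ↦ hZspan ▸ hmem𝔪 x) hc
  have hJac i j k l : B (Z i) (jacM p𝔪 (Z j) (Z k) (Z l)) =
      cyclicSum (pairing (structConst p𝔪 B Z)) i j k l := by
    simp only [jacM, map_add, cyclicSum, hpair,
      bilinForm_proj_lie_left hnat (hZ𝔪 _) (hZ𝔪 _) (hmem𝔪 _)]
  have hH : H * H = (1 / 16 : ℝ) • (cubicElt (structConst p𝔪 B Z) (fun i ↦ ι ⟨Z i, hZ𝔪 i⟩) *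
      cubicElt (structConst p𝔪 B Z) fun i ↦ ι ⟨Z i, hZ𝔪 i⟩) := by
    rw [show (1 / 16 : ℝ) = 1 / 4 * (1 / 4) by norm_num, ← smul_mul_smul_comm]
    rfl
  simp only [hJac, ← hpair]
  refine ⟨?_, fun hn ↦ ?_⟩
  · rw [hH, he.cubicElt_mul_self_eq_sum_lt hc]
    module
  · rw [hH, he.cubicElt_mul_self_of_card_le_four hc (by simpa using hn)]
    module

/-- On a naturally reductive space, the square of the cubic element `H`
has only terms of degree zero and four:  for `n ≥ 5`,
`H² = (3/8) Σ_{i,j} ⟨[Z_i,Z_j]_𝔪,[Z_i,Z_j]_𝔪⟩·1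
    − (9/2) Σ_{i<j<k<l} ⟨Z_i, Jac_𝔪(Z_j,Z_k,Z_l)⟩ Z_i·Z_j·Z_k·Z_l`,
while for `n = 3, 4` the degree-four part vanishes. -/
theorem stmt9
    {𝔤 : Type*} [LieRing 𝔤] [LieAlgebra ℝ 𝔤] [FiniteDimensional ℝ 𝔤]
    (𝔥 𝔪 : Submodule ℝ 𝔤)
    (p𝔥 p𝔪 : 𝔤 →ₗ[ℝ] 𝔤)
    (hsum : ∀ x, p𝔥 x + p𝔪 x = x)
    (hmem𝔥 : ∀ x, p𝔥 x ∈ 𝔥) (hmem𝔪 : ∀ x, p𝔪 x ∈ 𝔪)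
    (hid𝔥 : ∀ x ∈ 𝔥, p𝔥 x = x) (hid𝔪 : ∀ x ∈ 𝔪, p𝔪 x = x)
    (hsub : ∀ x ∈ 𝔥, ∀ y ∈ 𝔥, ⁅x, y⁆ ∈ 𝔥)
    (hhm : ∀ x ∈ 𝔥, ∀ y ∈ 𝔪, ⁅x, y⁆ ∈ 𝔪)
    (B : LinearMap.BilinForm ℝ 𝔤)
    (hBsymm : ∀ x ∈ 𝔪, ∀ y ∈ 𝔪, B x y = B y x)
    (hBpos : ∀ x ∈ 𝔪, x ≠ 0 → 0 < B x x)
    (hnat : ∀ x ∈ 𝔪, ∀ y ∈ 𝔪, ∀ z ∈ 𝔪, B (p𝔪 ⁅x, y⁆) z + B y (p𝔪 ⁅x, z⁆) = 0)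
    {n : ℕ} (Z : Fin n → 𝔤) (hZ𝔪 : ∀ i, Z i ∈ 𝔪)
    (hZon : ∀ i j, B (Z i) (Z j) = if i = j then 1 else 0)
    (hZspan : Submodule.span ℝ (Set.range Z) = 𝔪) :
    let ι := CliffordAlgebra.ι (mQF 𝔪 B)
    let H := cubicH 𝔪 p𝔪 B Z hZ𝔪
    (5 ≤ n →
      H * H =
        ((3 / 8 : ℝ) * ∑ i, ∑ j, B (p𝔪 ⁅Z i, Z j⁆) (p𝔪 ⁅Z i, Z j⁆)) •
            (1 : CliffordAlgebra (mQF 𝔪 B))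
          - (9 / 2 : ℝ) • ∑ i, ∑ j, ∑ k, ∑ l,
              (if i < j ∧ j < k ∧ k < l then
                B (Z i) (jacM p𝔪 (Z j) (Z k) (Z l)) •
                  (ι ⟨Z i, hZ𝔪 i⟩ * ι ⟨Z j, hZ𝔪 j⟩ * ι ⟨Z k, hZ𝔪 k⟩ * ι ⟨Z l, hZ𝔪 l⟩)
               else 0)) ∧
    (n = 3 ∨ n = 4 →
      H * H =
        ((3 / 8 : ℝ) * ∑ i, ∑ j, B (p𝔪 ⁅Z i, Z j⁆) (p𝔪 ⁅Z i, Z j⁆)) •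
          (1 : CliffordAlgebra (mQF 𝔪 B))) := by
  have h := stmt9_general hmem𝔪 hBsymm hnat hZ𝔪 hZon hZspan
  exact ⟨fun _ ↦ h.1, fun hn ↦ h.2 (by omega)⟩
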